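/- arXiv:1608.02009 — 2 statements merged into one kernel-verified Lean document; each statement's English description precedes it below -/
import Mathlib

section
/- Let n ≥ 1. The global self-similar Minkowski dimension of the set of dyadic lattice points satisfies dim_LG((2^ℕ)ⁿ) = 0, where 2^ℕ = {2^k : k ∈ ℕ} and (2^ℕ)ⁿ = 2^ℕ × ⋯ × 2^ℕ ⊂ ℝⁿ. -/
/-!
Let `A` be a set of positive reals in which each element is at least `q > 1` times every smaller
one. Two elements `x < y` of `A` in an interval of length `2R` satisfy `q x ≤ y < x + 2R`, so such
an interval either meets `A` in at most one point or lies to the left of `2qR / (q - 1)`. In the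
latter case one interval `[0, r]` takes care of the points of `A` up to `r`, and by the geometric
growth only `log_q (R / r) + O(1)` points are left. Taking products, a ball of radius `t r`
requires `O(log t)ⁿ` cubes of edge length `r`, uniformly in the ball and in `r`. The logarithm of
this is `o(log t)`, so the ratios defining the dimension tend to `0` uniformly as `t → ∞`.
-/

open MeasureTheory Metric Filter Set ENNReal NNReal

noncomputable section

/-- Points of `ℝⁿ`. -/
abbrev Pt (n : ℕ) := EuclideanSpace ℝ (Fin n)

/-- The axis-parallel closed cube with lower corner `c` and edge length `r`. -/
def closedCube {n : ℕ} (c : Pt n) (r : ℝ) : Set (Pt n) :=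
  {x | ∀ i, c i ≤ x i ∧ x i ≤ c i + r}

/-- `Ncov r E`: the minimal number of axis-parallel closed cubes of edge length `r`
needed to cover `E` (junk value `0` if no finite cover exists). -/
def Ncov {n : ℕ} (r : ℝ) (E : Set (Pt n)) : ℕ :=
  sInf {m : ℕ | ∃ s : Finset (Pt n), s.card = m ∧ E ⊆ ⋃ c ∈ s, closedCube c r}

/-- Upper Minkowski dimension (intended for bounded sets). -/
def dimM {n : ℕ} (F : Set (Pt n)) : ℝ :=
  limsup (fun r : ℝ => Real.log (Ncov r F) / Real.log (1 / r)) (nhdsWithin 0 (Ioi 0))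

/-- The set of ratios `log N_cov(r, E ∩ B) / log (r_B / r)` over balls `B = B(x, r_B)`
with `N * r ≤ r_B ≤ R`. -/
def locRatios {n : ℕ} (E : Set (Pt n)) (N r R : ℝ) : Set ℝ :=
  {d | ∃ (x : Pt n) (rB : ℝ), 0 < rB ∧ N * r ≤ rB ∧ rB ≤ R ∧
        d = Real.log (Ncov r (E ∩ ball x rB)) / Real.log (rB / r)}

/-- The local self-similar Minkowski dimension. -/
def dimLoc {n : ℕ} (E : Set (Pt n)) : ℝ :=
  liminf (fun N : ℝ =>
    limsup (fun r : ℝ => sSup (locRatios E N r 1)) (nhdsWithin 0 (Ioi 0))) atTop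

/-- The global self-similar Minkowski dimension. -/
def dimGlob {n : ℕ} (E : Set (Pt n)) : ℝ :=
  liminf (fun N : ℝ =>
    sSup {d : ℝ | ∃ r : ℝ, 0 < r ∧ ∃ (x : Pt n) (rB : ℝ), 0 < rB ∧ N * r ≤ rB ∧
      d = Real.log (Ncov r (E ∩ ball x rB)) / Real.log (rB / r)}) atTop

/-- The `Q_α`-energy `Φ_α(u, B(x₀,r)) = |B|^{2α/n-1} ∬_{B×B} |u(x)-u(y)|²/|x-y|^{n+2α}`. -/
def Phi {n : ℕ} (α : ℝ) (u : Pt n → ℝ) (x₀ : Pt n) (r : ℝ) : ℝ≥0∞ :=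
  (volume (ball x₀ r)) ^ (2 * α / (n : ℝ) - 1) *
    ∫⁻ x in ball x₀ r, ∫⁻ y in ball x₀ r,
      ENNReal.ofReal (|u x - u y| ^ 2 / ‖x - y‖ ^ ((n : ℝ) + 2 * α))

/-- The `Q_α`-norm of `u`. -/
def Qnorm {n : ℕ} (α : ℝ) (u : Pt n → ℝ) : ℝ≥0∞ :=
  ⨆ (x₀ : Pt n) (r : ℝ) (_ : 0 < r),
    (ENNReal.ofReal (r ^ (2 * α - (n : ℝ))) *
      ∫⁻ x in ball x₀ r, ∫⁻ y in ball x₀ r,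
        ENNReal.ofReal (|u x - u y| ^ 2 / ‖x - y‖ ^ ((n : ℝ) + 2 * α))) ^ (1/2 : ℝ)

/-- Membership in `Q_α(ℝⁿ)`: `u ∈ L²_loc` and the `Q_α`-norm is finite. -/
def MemQ {n : ℕ} (α : ℝ) (u : Pt n → ℝ) : Prop :=
  LocallyIntegrable (fun x => |u x| ^ 2) volume ∧ Qnorm α u < ⊤

/-- `Ψ_{α,q}(u, B(x₀,r))`. -/
def Psi {n : ℕ} (α q : ℝ) (u : Pt n → ℝ) (x₀ : Pt n) (r : ℝ) : ℝ≥0∞ :=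
  ∑' k : ℕ, ENNReal.ofReal ((2:ℝ) ^ (2 * (k:ℝ) * α)) *
    ((volume (ball x₀ r))⁻¹ * ∫⁻ x in ball x₀ r,
      ⨅ c : ℝ, ((volume (ball x ((2:ℝ) ^ (-(k:ℝ)) * r)))⁻¹ *
        ∫⁻ z in ball x ((2:ℝ) ^ (-(k:ℝ)) * r), ENNReal.ofReal (|u z - c| ^ q)) ^ (2 / q))

/-- The quantity `inf_c ( ⨍_{B(x,ρ)} |u - c|^σ )^{1/σ}`. -/
def oscAvg {n : ℕ} (σ : ℝ) (u : Pt n → ℝ) (x : Pt n) (ρ : ℝ) : ℝ≥0∞ :=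
  ⨅ c : ℝ, ((volume (ball x ρ))⁻¹ *
    ∫⁻ w in ball x ρ, ENNReal.ofReal (|u w - c| ^ σ)) ^ (1/σ)

/-- `f` is `η`-quasisymmetric, where the homeomorphism `η` of `[0,∞)` is encoded as an
order isomorphism of `ℝ≥0`. -/
def IsQS {n : ℕ} (f : Pt n → Pt n) (η : ℝ≥0 ≃o ℝ≥0) : Prop :=
  ∀ x a b : Pt n, x ≠ b →
    nndist (f x) (f a) ≤ η (nndist x a / nndist x b) * nndist (f x) (f b)

/-- The local Muckenhoupt class `A₁(ℝⁿ; S)`: the `A₁` condition holds on every ball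
`B(x₀,r)` with `2r < dist(x₀, S)`. -/
def MemA1 {n : ℕ} (w : Pt n → ℝ) (S : Set (Pt n)) : Prop :=
  ∃ C > 0, ∀ (x₀ : Pt n) (r : ℝ), 0 < r →
    ENNReal.ofReal (2 * r) < EMetric.infEdist x₀ S →
    ⨍ x in ball x₀ r, w x ∂volume ≤ C * essInf w (volume.restrict (ball x₀ r))

/-- `J` is the a.e. Jacobian of `f` (`J = |det Df|` a.e.) and the change-of-variables
formula holds for all nonnegative measurable integrands. -/
def JacobianCOV {n : ℕ} (f : Pt n → Pt n) (J : Pt n → ℝ) : Prop :=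
  (∀ᵐ x ∂(volume : Measure (Pt n)), ∃ D : Pt n →L[ℝ] Pt n,
      HasFDerivAt f D x ∧ J x = |D.det|) ∧
  ∀ g : Pt n → ℝ≥0∞, Measurable g →
    ∫⁻ x, g (f x) * ENNReal.ofReal (J x) = ∫⁻ y, g y

/-- The hyperplane `ℝ^{n-1} × {0}` (the last coordinate vanishes). -/
def Hset (n : ℕ) : Set (Pt n) := {x | ∀ i : Fin n, (i : ℕ) = n - 1 → x i = 0}

/-- The open upper half-space (last coordinate positive). -/
def upperHalf (n : ℕ) : Set (Pt n) := {x | ∀ i : Fin n, (i : ℕ) = n - 1 → 0 < x i}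

/-- The open lower half-space (last coordinate negative). -/
def lowerHalf (n : ℕ) : Set (Pt n) := {x | ∀ i : Fin n, (i : ℕ) = n - 1 → x i < 0}

/-- The hyperbolic length `∫₀¹ |γ'(t)|/dist(γ(t),H) dt` of a curve `γ`. -/
def hypLen {n : ℕ} (H : Set (Pt n)) (γ : ℝ → Pt n) : ℝ :=
  ∫ t in (0:ℝ)..1, ‖deriv γ t‖ / Metric.infDist (γ t) H

/-- The hyperbolic-type distance associated with the set `H`: the infimum of hyperbolic
lengths of differentiable curves joining `z` and `w` in the complement of `H`. -/
def hypDist {n : ℕ} (H : Set (Pt n)) (z w : Pt n) : ℝ :=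
  sInf {L : ℝ | ∃ γ : ℝ → Pt n, γ 0 = z ∧ γ 1 = w ∧
    (∀ t ∈ Icc (0:ℝ) 1, DifferentiableAt ℝ γ t ∧ γ t ∉ H) ∧ L = hypLen H γ}

/-- `L_f(z,t) = sup { |f(z)-f(w)| : |z-w| ≤ t }`. -/
def Lf {n : ℕ} (f : Pt n → Pt n) (z : Pt n) (t : ℝ) : ℝ :=
  sSup ((fun w => dist (f z) (f w)) '' closedBall z t)

section CoveringNumber

/-- `A` is covered by at most `m` closed intervals of length `r`. This is the one-dimensional
counterpart of `Ncov r A ≤ m`, without the junk value for sets that have no finite cover. -/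
def CoveredByIntervals (r : ℝ) (m : ℕ) (A : Set ℝ) : Prop :=
  ∃ S : Finset ℝ, S.card ≤ m ∧ A ⊆ ⋃ c ∈ S, Icc c (c + r)

variable {r : ℝ} {m k : ℕ} {A B : Set ℝ}

lemma CoveredByIntervals.mono (hA : CoveredByIntervals r m A) (hBA : B ⊆ A) (hmk : m ≤ k) :
    CoveredByIntervals r k B := by
  obtain ⟨S, hS, hAS⟩ := hA
  exact ⟨S, hS.trans hmk, hBA.trans hAS⟩

lemma CoveredByIntervals.union (hA : CoveredByIntervals r m A) (hB : CoveredByIntervals r k B) :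
    CoveredByIntervals r (m + k) (A ∪ B) := by
  classical
  obtain ⟨S, hS, hAS⟩ := hA
  obtain ⟨T, hT, hBT⟩ := hB
  refine ⟨S ∪ T, (Finset.card_union_le S T).trans (add_le_add hS hT), ?_⟩
  rw [Finset.set_biUnion_union]
  exact union_subset_union hAS hBT

lemma coveredByIntervals_Icc (c r : ℝ) : CoveredByIntervals r 1 (Icc c (c + r)) :=
  ⟨{c}, by simp, by simp⟩

lemma coveredByIntervals_of_encard_le (hr : 0 ≤ r) (hA : A.encard ≤ m) :
    CoveredByIntervals r m A := by
  obtain ⟨hfin, hcard⟩ := encard_le_coe_iff_finite_ncard_le.1 hA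
  refine ⟨hfin.toFinset, by rwa [← ncard_eq_toFinset_card A hfin], fun x hx => ?_⟩
  exact mem_iUnion₂.2 ⟨x, hfin.mem_toFinset.2 hx, le_rfl, le_add_of_nonneg_right hr⟩

variable {n : ℕ}

lemma Ncov_le_card {E : Set (Pt n)} {s : Finset (Pt n)} (hs : E ⊆ ⋃ c ∈ s, closedCube c r) :
    Ncov r E ≤ s.card :=
  Nat.sInf_le ⟨s, rfl, hs⟩

lemma Ncov_le_prod {E : Set (Pt n)} {A : Fin n → Set ℝ} {m : Fin n → ℕ}
    (hE : ∀ x ∈ E, ∀ i, x i ∈ A i) (hA : ∀ i, CoveredByIntervals r (m i) (A i)) :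
    Ncov r E ≤ ∏ i, m i := by
  classical
  choose S hcard hS using hA
  have hcover : E ⊆ ⋃ c ∈ (Fintype.piFinset S).image (WithLp.toLp 2), closedCube c r := by
    intro x hx
    choose c hcS hc using fun i => mem_iUnion₂.1 (hS i (hE x hx i))
    exact mem_iUnion₂.2
      ⟨WithLp.toLp 2 c, Finset.mem_image_of_mem _ (Fintype.mem_piFinset.2 hcS), hc⟩
  calc Ncov r E ≤ ((Fintype.piFinset S).image (WithLp.toLp 2)).card := Ncov_le_card hcover
    _ ≤ (Fintype.piFinset S).card := Finset.card_image_le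
    _ = ∏ i, (S i).card := Fintype.card_piFinset S
    _ ≤ ∏ i, m i := Finset.prod_le_prod' fun i _ => hcard i

lemma log_natCast_le_log_natCast (h : m ≤ k) : Real.log m ≤ Real.log k := by
  rcases m.eq_zero_or_pos with rfl | hm
  · simpa using Real.log_natCast_nonneg k
  · exact Real.log_le_log (Nat.cast_pos.2 hm) (Nat.cast_le.2 h)

lemma log_Ncov_le {E : Set (Pt n)} {A : Fin n → Set ℝ}
    (hE : ∀ x ∈ E, ∀ i, x i ∈ A i) (hA : ∀ i, CoveredByIntervals r m (A i)) :
    Real.log (Ncov r E) ≤ n * Real.log m := by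
  have hcov : Ncov r E ≤ m ^ n := by simpa using Ncov_le_prod hE hA
  simpa using log_natCast_le_log_natCast hcov

end CoveringNumber

section GlobalDimension

variable {n : ℕ} {E : Set (Pt n)}

/-- The set of ratios `log N_cov(r, E ∩ B) / log (r_B / r)` over all `r > 0` and all balls `B` of
radius `r_B ≥ N r`; `dimGlob E` is the limit inferior of its suprema as `N → ∞`. -/
def globRatios (E : Set (Pt n)) (N : ℝ) : Set ℝ :=
  {d | ∃ r : ℝ, 0 < r ∧ ∃ (x : Pt n) (rB : ℝ), 0 < rB ∧ N * r ≤ rB ∧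
    d = Real.log (Ncov r (E ∩ ball x rB)) / Real.log (rB / r)}

lemma dimGlob_eq_liminf_sSup_globRatios (E : Set (Pt n)) :
    dimGlob E = liminf (fun N => sSup (globRatios E N)) atTop :=
  rfl

lemma sSup_globRatios_nonneg (E : Set (Pt n)) {N : ℝ} (hN : 1 ≤ N) :
    0 ≤ sSup (globRatios E N) := by
  refine Real.sSup_nonneg ?_
  rintro d ⟨r, hr, x, R, -, hNR, rfl⟩
  have hRr : 1 ≤ R / r := hN.trans ((le_div_iff₀ hr).2 hNR)
  exact div_nonneg (Real.log_natCast_nonneg _) (Real.log_nonneg hRr)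

lemma eventually_sSup_globRatios_nonneg (E : Set (Pt n)) :
    ∀ᶠ N in atTop, 0 ≤ sSup (globRatios E N) :=
  (eventually_ge_atTop 1).mono fun _ => sSup_globRatios_nonneg E

lemma dimGlob_nonneg (E : Set (Pt n)) : 0 ≤ dimGlob E := by
  rw [dimGlob_eq_liminf_sSup_globRatios, liminf_eq]
  exact Real.sSup_nonneg' ⟨0, eventually_sSup_globRatios_nonneg E, le_rfl⟩

lemma dimGlob_le_of_eventually_log_Ncov_le {s : ℝ}
    (h : ∀ᶠ t in atTop, ∀ r > 0, ∀ x : Pt n,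
      Real.log (Ncov r (E ∩ ball x (t * r))) ≤ s * Real.log t) :
    dimGlob E ≤ s := by
  have hs : 0 ≤ s := by
    obtain ⟨t, ht, ht1⟩ := (h.and (eventually_gt_atTop 1)).exists
    have hlog := (Real.log_natCast_nonneg _).trans (ht 1 one_pos 0)
    exact nonneg_of_mul_nonneg_left hlog (Real.log_pos ht1)
  obtain ⟨T, hT⟩ := eventually_atTop.1 h
  rw [dimGlob_eq_liminf_sSup_globRatios]
  refine liminf_le_of_frequently_le (Eventually.frequently ?_)
    ⟨0, eventually_map.2 (eventually_sSup_globRatios_nonneg E)⟩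
  filter_upwards [eventually_ge_atTop T, eventually_gt_atTop 1] with N hTN hN
  refine Real.sSup_le ?_ hs
  rintro d ⟨r, hr, x, R, -, hNR, rfl⟩
  have hNt : N ≤ R / r := (le_div_iff₀ hr).2 hNR
  rw [div_le_iff₀ (Real.log_pos (hN.trans_le hNt))]
  simpa only [div_mul_cancel₀ R hr.ne'] using hT (R / r) (hTN.trans hNt) r hr x

lemma dimGlob_eq_zero_of_isLittleO {φ : ℝ → ℝ} (hφ : φ =o[atTop] Real.log)
    (h : ∀ᶠ t in atTop, ∀ r > 0, ∀ x : Pt n,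
      Real.log (Ncov r (E ∩ ball x (t * r))) ≤ φ t) :
    dimGlob E = 0 := by
  refine le_antisymm (le_of_forall_pos_le_add fun ε hε => ?_) (dimGlob_nonneg E)
  rw [zero_add]
  refine dimGlob_le_of_eventually_log_Ncov_le ?_
  filter_upwards [h, hφ.def hε, eventually_ge_atTop 1] with t ht hφt ht1 r hr x
  calc Real.log (Ncov r (E ∩ ball x (t * r))) ≤ φ t := ht r hr x
    _ ≤ ‖φ t‖ := Real.le_norm_self _
    _ ≤ ε * ‖Real.log t‖ := hφt
    _ = ε * Real.log t := by rw [Real.norm_of_nonneg (Real.log_nonneg ht1)]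

end GlobalDimension

section Lacunary

/-- A set of positive reals is `q`-lacunary if each of its elements is at least `q` times every
smaller one. Unlike a lacunary sequence, such a set may accumulate at `0`. -/
structure IsLacunary (q : ℝ) (A : Set ℝ) : Prop where
  pos : ∀ x ∈ A, 0 < x
  mul_le : ∀ x ∈ A, ∀ y ∈ A, x < y → q * x ≤ y

lemma isLacunary_range_pow {q : ℝ} (hq : 1 ≤ q) :
    IsLacunary q (range fun k : ℕ => q ^ k) where
  pos := by
    rintro _ ⟨k, rfl⟩
    positivity
  mul_le := by
    rintro _ ⟨m, rfl⟩ _ ⟨k, rfl⟩ hmk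
    have hlt : m < k := lt_of_not_ge fun hkm => hmk.not_ge (pow_le_pow_right₀ hq hkm)
    simpa only [pow_succ'] using pow_le_pow_right₀ hq (Nat.succ_le_of_lt hlt)

variable {q r : ℝ} {A : Set ℝ}

namespace IsLacunary

lemma strictMonoOn_floor_logb (hA : IsLacunary q A) (hq : 1 < q) (hr : 0 < r) :
    StrictMonoOn (fun x => ⌊Real.logb q (x / r)⌋₊) (A ∩ Ici r) := by
  rintro x ⟨hxA, hrx⟩ y ⟨hyA, -⟩ hxy
  have hx := hA.pos x hxA
  have hxr : 1 ≤ x / r := (one_le_div hr).2 hrx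
  have hlog : Real.logb q (x / r) + 1 ≤ Real.logb q (y / r) := by
    rw [← Real.logb_self_eq_one hq, ← Real.logb_mul (by positivity) (by positivity)]
    refine Real.logb_le_logb_of_le hq (by positivity) ?_
    rw [div_mul_eq_mul_div, mul_comm]
    exact div_le_div_of_nonneg_right (hA.mul_le x hxA y hyA hxy) hr.le
  calc ⌊Real.logb q (x / r)⌋₊ < ⌊Real.logb q (x / r)⌋₊ + 1 := Nat.lt_succ_self _
    _ = ⌊Real.logb q (x / r) + 1⌋₊ := (Nat.floor_add_one (Real.logb_nonneg hq hxr)).symm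
    _ ≤ ⌊Real.logb q (y / r)⌋₊ := Nat.floor_mono hlog

lemma encard_inter_Icc_le (hA : IsLacunary q A) (hq : 1 < q) (hr : 0 < r) (t : ℝ) :
    (A ∩ Icc r (t * r)).encard ≤ (⌊Real.logb q t⌋₊ + 1 : ℕ) := by
  have hmaps : MapsTo (fun x => ⌊Real.logb q (x / r)⌋₊) (A ∩ Icc r (t * r))
      (Finset.range (⌊Real.logb q t⌋₊ + 1)) := by
    rintro x ⟨hxA, -, hxt⟩
    have hx := hA.pos x hxA
    have hlog : Real.logb q (x / r) ≤ Real.logb q t :=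
      Real.logb_le_logb_of_le hq (by positivity) ((div_le_iff₀ hr).2 hxt)
    simpa [Nat.lt_succ_iff] using Nat.floor_mono hlog
  have hinj : InjOn (fun x => ⌊Real.logb q (x / r)⌋₊) (A ∩ Icc r (t * r)) :=
    (hA.strictMonoOn_floor_logb hq hr).injOn.mono (inter_subset_inter_right A Icc_subset_Ici_self)
  simpa only [encard_coe_eq_coe_finsetCard, Finset.card_range] using
    encard_le_encard_of_injOn hmaps hinj

lemma subsingleton_or_subset_Icc (hA : IsLacunary q A) (hq : 1 < q) (a R : ℝ) :
    (A ∩ ball a R).Subsingleton ∨ A ∩ ball a R ⊆ Icc 0 (2 * q / (q - 1) * R) := by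
  rw [← not_nontrivial_iff, ← imp_iff_not_or]
  intro hnt z hz
  obtain ⟨x, ⟨hxA, hxa⟩, y, ⟨hyA, hya⟩, hxy⟩ := hnt.exists_lt
  obtain ⟨hzA, hza⟩ := hz
  rw [Real.ball_eq_Ioo] at hxa hya hza
  have hgap : q * (a - R) ≤ a + R :=
    calc q * (a - R) ≤ q * x := by gcongr; exact hxa.1.le
      _ ≤ y := hA.mul_le x hxA y hyA hxy
      _ ≤ a + R := hya.2.le
  refine ⟨(hA.pos z hzA).le, hza.2.le.trans ?_⟩
  rw [div_mul_eq_mul_div, le_div_iff₀ (by linarith)]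
  linarith

lemma coveredByIntervals_inter_ball (hA : IsLacunary q A) (hq : 1 < q) (hr : 0 < r) (a t : ℝ) :
    CoveredByIntervals r (⌊Real.logb q (2 * q / (q - 1) * t)⌋₊ + 2) (A ∩ ball a (t * r)) := by
  rcases hA.subsingleton_or_subset_Icc hq a (t * r) with hsub | hsub
  · have hcard : (A ∩ ball a (t * r)).encard ≤ (1 : ℕ) := by
      simpa using encard_le_one_iff_subsingleton.2 hsub
    exact (coveredByIntervals_of_encard_le hr.le hcard).mono Subset.rfl (by lia)
  · rw [← mul_assoc] at hsub
    have hcov := (coveredByIntervals_of_encard_le hr.le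
      (hA.encard_inter_Icc_le hq hr (2 * q / (q - 1) * t))).union (coveredByIntervals_Icc 0 r)
    refine hcov.mono (fun x hx => ?_) le_rfl
    rcases le_total r x with hrx | hxr
    · exact Or.inl ⟨hx.1, hrx, (hsub hx).2⟩
    · exact Or.inr ⟨(hsub hx).1, by rwa [zero_add]⟩

end IsLacunary

lemma log_floor_logb_add_isLittleO_log {C : ℝ} (hq : 1 < q) (hC : 0 < C) (m : ℕ) :
    (fun t => Real.log (⌊Real.logb q (C * t)⌋₊ + m : ℕ)) =o[atTop] Real.log := by
  have hlogb : Tendsto (fun t => Real.logb q (C * t)) atTop atTop :=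
    (Real.tendsto_logb_atTop hq).comp (tendsto_id.const_mul_atTop hC)
  have hcount : Tendsto (fun t => ((⌊Real.logb q (C * t)⌋₊ + m : ℕ) : ℝ)) atTop atTop :=
    tendsto_natCast_atTop_atTop.comp
      ((tendsto_add_atTop_nat m).comp (tendsto_nat_floor_atTop.comp hlogb))
  have hfloor : (fun t => (⌊Real.logb q (C * t)⌋₊ : ℝ)) =O[atTop] Real.log :=
    (Asymptotics.isEquivalent_nat_floor.isBigO.comp_tendsto hlogb).trans
      (Real.isBigO_logb_const_mul_log_atTop C)
  have hcountO : (fun t => ((⌊Real.logb q (C * t)⌋₊ + m : ℕ) : ℝ)) =O[atTop] Real.log := by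
    simpa only [Nat.cast_add] using hfloor.add Real.isLittleO_const_log_atTop.isBigO
  exact (Real.isLittleO_log_id_atTop.comp_tendsto hcount).trans_isBigO hcountO

theorem dimGlob_dyadicLattice_general {n : ℕ} (hq : 1 < q) {A : Fin n → Set ℝ}
    (hA : ∀ i, IsLacunary q (A i)) : dimGlob {x : Pt n | ∀ i, x i ∈ A i} = 0 := by
  have hC : 0 < 2 * q / (q - 1) := div_pos (by linarith) (by linarith)
  refine dimGlob_eq_zero_of_isLittleO
    ((log_floor_logb_add_isLittleO_log hq hC 2).const_mul_left n) (Eventually.of_forall ?_)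
  intro t r hr x
  refine log_Ncov_le ?_ fun i => (hA i).coveredByIntervals_inter_ball hq hr (x i) t
  rintro y ⟨hyA, hyx⟩ i
  exact ⟨hyA i, (PiLp.norm_apply_le (y - x) i).trans_lt (mem_ball_iff_norm.1 hyx)⟩

end Lacunary

/-- `dim_LG ((2^ℕ)ⁿ) = 0`, where `2^ℕ = {2^k : k ∈ ℕ}`. -/
theorem dimGlob_dyadicLattice (n : ℕ) (hn : 1 ≤ n) :
    dimGlob {x : Pt n | ∀ i, ∃ k : ℕ, x i = ((2 ^ k : ℕ) : ℝ)} = 0 := by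
  simpa [eq_comm] using
    dimGlob_dyadicLattice_general one_lt_two fun _ : Fin n => isLacunary_range_pow one_le_two

end
end

section
/- Let n ≥ 1 and a ∈ (0,1). Then dim_M E_a = dim_L E_a = dim_L ℰ_a = dim_LG E_a = dim_LG ℰ_a = n·log 2 / log(2/(1−a)) (equivalently n/log₂(2/(1−a))). -/
open MeasureTheory Metric Filter Set ENNReal NNReal

noncomputable section

/-- The set of centers of all generation-`m` cubes in the Cantor-type construction with
parameter `a`: one-dimensional generation-`m` intervals have length `((1-a)/2)^m`, and a
bit string `b` records at each step whether the left or right child was chosen (the right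
child's left endpoint exceeds the parent's by `((1-a)/2)^t (1 - (1-a)/2)` at step `t+1`).
`m = 0` gives the center `(1/2, …, 1/2)` of `[0,1]ⁿ`. -/
def cantorCenters (n : ℕ) (a : ℝ) : Set (Pt n) :=
  {z | ∃ m : ℕ, ∀ i, ∃ b : Fin m → Bool,
    z i = (∑ t : Fin m, if b t then ((1 - a)/2) ^ (t : ℕ) * (1 - (1 - a)/2) else 0)
          + ((1 - a)/2) ^ m / 2}

/-- The set `E_a`: the closure of the set of all centers. -/
def Ea (n : ℕ) (a : ℝ) : Set (Pt n) := closure (cantorCenters n a)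

/-- The self-similar extension `ℰ_a = ⋃_{k ≥ 0} (2/(1-a))^k · E_a`. -/
def calEa (n : ℕ) (a : ℝ) : Set (Pt n) :=
  {y | ∃ k : ℕ, ∃ x ∈ Ea n a, y = ((2 / (1 - a)) ^ k : ℝ) • x}

/-!
The centers of the Cantor intervals of ratio `l = (1 - a) / 2` form a set `S` with
`S = {1 / 2} ∪ l S ∪ (l S + 1 - l)`, and these three pieces lie at mutual distance at least
`1 / 2 - l`. Hence a subset of a dilate of `S` whose diameter is a small multiple of `R` lies in a
single affine copy of `S` of size at most `R`, and counting Cantor intervals shows that such a copy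
is covered by `C * (R / r) ^ s` intervals of length `r`, with `s = log 2 / log (1 / l)`. Products of
`n` such coverings cover `ℰ_a ∩ B(x, R)`, the closure being harmless because cubes are closed.
Conversely the `2 ^ (m * n)` centers of generation `m` are `l ^ m * (1 / 2 - l)`-separated, so this
count is optimal at small scales, already for `E_a` near the origin. The two estimates determine
every dimension at once, since `log C / log (R / r)` tends to `0` as `R / r` tends to infinity.
-/

/-- `A` is covered by at most `B` members of the family `K`. The bound is real so that it can be
an expression such as `C * (R / r) ^ s`. -/
def CoveredBy {ι X : Type*} (K : ι → Set X) (B : ℝ) (A : Set X) : Prop :=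
  ∃ s : Finset ι, (s.card : ℝ) ≤ B ∧ A ⊆ ⋃ c ∈ s, K c

namespace CoveredBy

variable {ι κ X Y : Type*} {K : ι → Set X} {L : κ → Set Y} {A A' : Set X} {B B' : ℝ}

theorem mono (h : CoveredBy K B A) (hA : A' ⊆ A) (hB : B ≤ B') : CoveredBy K B' A' :=
  let ⟨s, hs, hc⟩ := h
  ⟨s, hs.trans hB, hA.trans hc⟩

theorem of_subset {c : ι} (h : A ⊆ K c) : CoveredBy K 1 A :=
  ⟨{c}, by simp, by simpa using h⟩

theorem union (h : CoveredBy K B A) (h' : CoveredBy K B' A') : CoveredBy K (B + B') (A ∪ A') := by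
  classical
  obtain ⟨s, hs, hc⟩ := h
  obtain ⟨s', hs', hc'⟩ := h'
  refine ⟨s ∪ s', ?_, ?_⟩
  · have : ((s ∪ s').card : ℝ) ≤ s.card + s'.card := mod_cast Finset.card_union_le s s'
    linarith
  · rw [Finset.set_biUnion_union]
    exact union_subset_union hc hc'

theorem image (h : CoveredBy K B A) {f : X → Y} {g : ι → κ}
    (hfg : ∀ c, MapsTo f (K c) (L (g c))) : CoveredBy L B (f '' A) := by
  classical
  obtain ⟨s, hs, hc⟩ := h
  refine ⟨s.image g, le_trans (mod_cast Finset.card_image_le) hs, ?_⟩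
  rintro _ ⟨x, hx, rfl⟩
  obtain ⟨c, hcs, hxc⟩ := mem_iUnion₂.1 (hc hx)
  exact mem_iUnion₂.2 ⟨g c, Finset.mem_image_of_mem g hcs, hfg c hxc⟩

theorem pi {n : ℕ} {ι X : Fin n → Type*} {K : ∀ i, ι i → Set (X i)} {A : ∀ i, Set (X i)}
    (h : ∀ i, CoveredBy (K i) B (A i)) :
    CoveredBy (fun c : ∀ i, ι i => univ.pi fun i => K i (c i)) (B ^ n) (univ.pi A) := by
  choose s hs hc using h
  refine ⟨Fintype.piFinset s, ?_, fun x hx => ?_⟩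
  · rw [Fintype.card_piFinset, Nat.cast_prod]
    simpa using Finset.prod_le_prod (s := Finset.univ) (fun i _ => Nat.cast_nonneg _)
      fun i _ => hs i
  · have hx' (i : Fin n) : ∃ c ∈ s i, x i ∈ K i c := by simpa using hc i (hx i trivial)
    choose c hcs hxc using hx'
    exact mem_iUnion₂.2 ⟨c, Fintype.mem_piFinset.2 hcs, fun i _ => hxc i⟩

theorem closure [TopologicalSpace X] (h : CoveredBy K B A) (hK : ∀ c, IsClosed (K c)) :
    CoveredBy K B (closure A) :=
  let ⟨s, hs, hc⟩ := h
  ⟨s, hs, closure_minimal hc (s.finite_toSet.isClosed_biUnion fun c _ => hK c)⟩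

theorem card_le {α : Type*} [Fintype α] (h : CoveredBy K B A) {f : α → X} (hfA : ∀ a, f a ∈ A)
    (hf : ∀ a b c, f a ∈ K c → f b ∈ K c → a = b) : (Fintype.card α : ℝ) ≤ B := by
  obtain ⟨s, hs, hc⟩ := h
  have hcell (a : α) : ∃ c ∈ s, f a ∈ K c := by simpa using hc (hfA a)
  choose g hgs hfg using hcell
  have hg : Function.Injective g := fun a b hab => hf a b (g a) (hfg a) (hab ▸ hfg b)
  refine le_trans ?_ hs
  exact_mod_cast Finset.card_le_card_of_injOn g (fun a _ => hgs a) hg.injOn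

theorem affine_Icc {A : Set ℝ} {r t : ℝ} (h : CoveredBy (fun c => Icc c (c + r)) B A)
    (ht : 0 ≤ t) (d : ℝ) :
    CoveredBy (fun c => Icc c (c + t * r)) B ((fun x => t * x + d) '' A) := by
  refine h.image (g := fun c => t * c + d) fun c x hx => ?_
  have hcx := mul_le_mul_of_nonneg_left hx.1 ht
  have hxc := mul_le_mul_of_nonneg_left hx.2 ht
  constructor <;> linarith

theorem mono_Icc {A : Set ℝ} {r r' : ℝ} (h : CoveredBy (fun c => Icc c (c + r)) B A)
    (hr : r ≤ r') : CoveredBy (fun c => Icc c (c + r')) B A := by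
  simpa using h.image (L := fun c => Icc c (c + r')) (f := id) (g := id)
    fun c x hx => ⟨hx.1, hx.2.trans (by simpa using hr)⟩

end CoveredBy

section Cubes

variable {n : ℕ} {r B : ℝ} {E : Set (Pt n)}

theorem isClosed_closedCube (c : Pt n) (r : ℝ) : IsClosed (closedCube c r) := by
  simp only [closedCube, ofPred_forall]
  exact isClosed_iInter fun i => isClosed_Icc.preimage (by fun_prop)

theorem abs_sub_le_of_mem_closedCube {c x y : Pt n} (hx : x ∈ closedCube c r)
    (hy : y ∈ closedCube c r) (i : Fin n) : |x i - y i| ≤ r := by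
  rw [abs_le]
  constructor <;> linarith [(hx i).1, (hx i).2, (hy i).1, (hy i).2]

theorem CoveredBy.closure_box {T : Set ℝ} {x : Pt n} {R : ℝ}
    (h : ∀ y, CoveredBy (fun c => Icc c (c + r)) B (T ∩ ball y R)) :
    CoveredBy (closedCube · r) (B ^ n) (_root_.closure {z : Pt n | ∀ i, z i ∈ T} ∩ ball x R) := by
  have hbox : CoveredBy (closedCube · r) (B ^ n) ({z : Pt n | ∀ i, z i ∈ T} ∩ ball x R) := by
    refine ((CoveredBy.pi fun i => h (x i)).image (L := (closedCube · r)) (f := WithLp.toLp 2)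
      (g := WithLp.toLp 2)
      fun c z hz i => hz i trivial).mono (fun z hz => ?_) le_rfl
    exact ⟨z.ofLp, fun i _ => ⟨hz.1 i, (PiLp.dist_apply_le z x i).trans_lt hz.2⟩, rfl⟩
  refine (hbox.closure fun c => isClosed_closedCube c r).mono ?_ le_rfl
  rw [inter_comm, inter_comm _ (ball x R)]
  exact isOpen_ball.inter_closure

theorem isBounded_box {S : Set ℝ} (hS : Bornology.IsBounded S) :
    Bornology.IsBounded {z : Pt n | ∀ i, z i ∈ S} := by
  refine ((PiLp.antilipschitzWith_ofLp 2 _).isBounded_preimage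
    (Bornology.IsBounded.pi fun _ => hS)).subset fun z (hz : ∀ i, z i ∈ S) i _ => hz i

theorem Ncov_le (h : CoveredBy (closedCube · r) B E) : (Ncov r E : ℝ) ≤ B :=
  let ⟨s, hs, hc⟩ := h
  le_trans (mod_cast Nat.sInf_le ⟨s, rfl, hc⟩) hs

theorem CoveredBy.coveredBy_Ncov (h : CoveredBy (closedCube · r) B E) :
    CoveredBy (closedCube · r) (Ncov r E) E := by
  obtain ⟨s, -, hc⟩ := h
  obtain ⟨t, ht, htc⟩ := Nat.sInf_mem (s := {m | ∃ s : Finset (Pt n), s.card = m ∧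
    E ⊆ ⋃ c ∈ s, closedCube c r}) ⟨_, s, rfl, hc⟩
  exact ⟨t, mod_cast ht.le, htc⟩

end Cubes

section Limits

open scoped Topology

variable {α : Type*} {F : Filter α} {f g : α → ℝ} {s C q u v y : ℝ}

theorem tendsto_add_div_log (hf : Tendsto f F atTop) (s v : ℝ) :
    Tendsto (fun x => s + v / Real.log (f x)) F (𝓝 s) := by
  simpa using ((Real.tendsto_log_atTop.comp hf).const_div_atTop v).const_add s

theorem log_div_log_le (hs : 0 ≤ s) (hC : 1 ≤ C) (hq : 1 < q) (hy : 0 ≤ y) (h : y ≤ C * q ^ s) :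
    Real.log y / Real.log q ≤ s + Real.log C / Real.log q := by
  have hlq : 0 < Real.log q := Real.log_pos hq
  have hlC : 0 ≤ Real.log C := Real.log_nonneg hC
  rw [div_le_iff₀ hlq, add_mul, div_mul_cancel₀ _ hlq.ne']
  obtain rfl | hy := hy.eq_or_lt
  · rw [Real.log_zero]
    positivity
  · calc Real.log y ≤ Real.log (C * q ^ s) := Real.log_le_log hy h
      _ = s * Real.log q + Real.log C := by
        rw [Real.log_mul (by positivity) (by positivity), Real.log_rpow (by positivity), add_comm]

theorem add_div_log_le (hC : 0 < C) (hq : 1 < q) (h : C * q ^ s ≤ y) :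
    s + Real.log C / Real.log q ≤ Real.log y / Real.log q := by
  have hlq : 0 < Real.log q := Real.log_pos hq
  rw [le_div_iff₀ hlq, add_mul, div_mul_cancel₀ _ hlq.ne']
  calc s * Real.log q + Real.log C = Real.log (C * q ^ s) := by
        rw [Real.log_mul (by positivity) (by positivity), Real.log_rpow (by positivity), add_comm]
    _ ≤ Real.log y := Real.log_le_log (by positivity) h

theorem limsup_mem_Icc_of_tendsto [F.NeBot] (hg : Tendsto g F (𝓝 s)) (hgf : ∀ᶠ x in F, g x ≤ f x)
    (hfu : ∀ᶠ x in F, f x ≤ u) : limsup f F ∈ Icc s u := by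
  have hbelow : F.IsBoundedUnder (· ≥ ·) f := hg.isBoundedUnder_ge.mono_ge hgf
  refine ⟨?_, limsup_le_of_le hbelow.isCoboundedUnder_le hfu⟩
  rw [← hg.limsup_eq]
  exact limsup_le_limsup hgf hg.isCoboundedUnder_le (isBoundedUnder_of_eventually_le hfu)

theorem liminf_eq_of_mem_Icc_add_div_log {G : ℝ → ℝ}
    (hG : ∀ N, 1 < N → G N ∈ Icc s (s + v / Real.log N)) : liminf G atTop = s := by
  refine (tendsto_of_tendsto_of_tendsto_of_le_of_le' tendsto_const_nhds
    (tendsto_add_div_log tendsto_id s v) ?_ ?_).liminf_eq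
  · exact (eventually_gt_atTop 1).mono fun N hN => (hG N hN).1
  · exact (eventually_gt_atTop 1).mono fun N hN => (hG N hN).2

end Limits

/-! ### Dimensions from covering bounds -/

section Dimensions

open scoped Topology

variable {n : ℕ} {E F : Set (Pt n)} {C c s r R N : ℝ} {x : Pt n}

/-- The homogeneity condition behind the Assouad dimension: every ball of radius `R` meets `E` in
a set covered by `C * (R / r) ^ s` cubes of edge `r`. -/
structure HasUpperCoverBound (E : Set (Pt n)) (C s : ℝ) : Prop where
  nonneg : 0 ≤ s
  one_le : 1 ≤ C
  coveredBy : ∀ x r R, 0 < r → r ≤ R →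
    CoveredBy (closedCube · r) (C * (R / r) ^ s) (E ∩ ball x R)

/-- At all small scales `r`, covering `E` inside the unit ball takes at least `c * (1 / r) ^ s`
cubes of edge `r`. -/
structure HasLowerCoverBound (E : Set (Pt n)) (c s : ℝ) : Prop where
  pos : 0 < c
  eventually_le : ∀ᶠ r in 𝓝[>] (0 : ℝ), ∀ B,
    CoveredBy (closedCube · r) B (E ∩ ball 0 1) → c * (1 / r) ^ s ≤ B

/-- The ratio `log N_cov(r, E ∩ B(x, R)) / log (R / r)` that `dimLoc` and `dimGlob` optimize. -/
def coverRatio (E : Set (Pt n)) (r : ℝ) (x : Pt n) (R : ℝ) : ℝ :=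
  Real.log (Ncov r (E ∩ ball x R)) / Real.log (R / r)

theorem HasUpperCoverBound.mono (h : HasUpperCoverBound E C s) (hF : F ⊆ E) :
    HasUpperCoverBound F C s where
  nonneg := h.nonneg
  one_le := h.one_le
  coveredBy x r R hr hR := (h.coveredBy x r R hr hR).mono (inter_subset_inter_left _ hF) le_rfl

theorem HasLowerCoverBound.mono (h : HasLowerCoverBound E c s) (hF : E ⊆ F) :
    HasLowerCoverBound F c s where
  pos := h.pos
  eventually_le := h.eventually_le.mono fun _ hr B hB =>
    hr B (hB.mono (inter_subset_inter_left _ hF) le_rfl)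

theorem HasUpperCoverBound.coverRatio_le (h : HasUpperCoverBound E C s) (hN : 1 < N) (hr : 0 < r)
    (hR : N * r ≤ R) : coverRatio E r x R ≤ s + Real.log C / Real.log N := by
  have hNq : N ≤ R / r := by rwa [le_div_iff₀ hr]
  have hrR : r ≤ R := by nlinarith
  have hlogN : 0 < Real.log N := Real.log_pos hN
  have hlogC : 0 ≤ Real.log C := Real.log_nonneg h.one_le
  calc coverRatio E r x R ≤ s + Real.log C / Real.log (R / r) :=
        log_div_log_le h.nonneg h.one_le (hN.trans_le hNq) (Nat.cast_nonneg _)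
          (Ncov_le (h.coveredBy x r R hr hrR))
    _ ≤ s + Real.log C / Real.log N := by gcongr

theorem HasLowerCoverBound.eventually_le_coverRatio (hL : HasLowerCoverBound E c s)
    (hU : HasUpperCoverBound E C s) :
    ∀ᶠ r in 𝓝[>] 0, s + Real.log c / Real.log (1 / r) ≤ coverRatio E r 0 1 := by
  filter_upwards [hL.eventually_le, Ioo_mem_nhdsGT one_pos] with r hr ⟨hr0, hr1⟩
  exact add_div_log_le hL.pos ((one_lt_div hr0).2 hr1)
    (hr _ (hU.coveredBy 0 r 1 hr0 hr1.le).coveredBy_Ncov)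

theorem tendsto_add_div_log_one_div (s v : ℝ) :
    Tendsto (fun r : ℝ => s + v / Real.log (1 / r)) (𝓝[>] 0) (𝓝 s) :=
  tendsto_add_div_log (tendsto_inv_nhdsGT_zero.congr fun r => (one_div r).symm) s v

theorem eventually_mul_le_one (N : ℝ) : ∀ᶠ r in 𝓝[>] (0 : ℝ), N * r ≤ 1 := by
  have hlim : Tendsto (fun r : ℝ => N * r) (𝓝[>] 0) (𝓝 0) := by
    simpa using ((continuous_const_mul N).tendsto 0).mono_left nhdsWithin_le_nhds
  exact hlim.eventually_le_const one_pos

theorem dimGlob_eq (hU : HasUpperCoverBound E C s) (hL : HasLowerCoverBound E c s) :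
    dimGlob E = s := by
  refine liminf_eq_of_mem_Icc_add_div_log (v := Real.log C) fun N hN => ?_
  have hub : s + Real.log C / Real.log N ∈ upperBounds {d | ∃ r, 0 < r ∧ ∃ (x : Pt n) (R : ℝ),
      0 < R ∧ N * r ≤ R ∧ d = coverRatio E r x R} := by
    rintro _ ⟨r, hr, x, R, -, hR, rfl⟩
    exact hU.coverRatio_le hN hr hR
  constructor
  · refine le_of_tendsto (tendsto_add_div_log_one_div s (Real.log c)) ?_
    filter_upwards [hL.eventually_le_coverRatio hU, eventually_mul_le_one N, self_mem_nhdsWithin]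
      with r hr hNr hr0
    exact hr.trans (le_csSup ⟨_, hub⟩ ⟨r, hr0, 0, 1, one_pos, hNr, rfl⟩)
  · exact csSup_le ⟨_, 1, one_pos, 0, N, by positivity, (mul_one N).le, rfl⟩ hub

theorem dimLoc_eq (hU : HasUpperCoverBound E C s) (hL : HasLowerCoverBound E c s) :
    dimLoc E = s := by
  refine liminf_eq_of_mem_Icc_add_div_log (v := Real.log C) fun N hN => ?_
  have hub {r : ℝ} (hr : 0 < r) :
      s + Real.log C / Real.log N ∈ upperBounds (locRatios E N r 1) := by
    rintro _ ⟨x, R, -, hR, -, rfl⟩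
    exact hU.coverRatio_le hN hr hR
  have hmem {r : ℝ} (hr : N * r ≤ 1) : coverRatio E r 0 1 ∈ locRatios E N r 1 :=
    ⟨0, 1, one_pos, hr, le_rfl, rfl⟩
  refine limsup_mem_Icc_of_tendsto (tendsto_add_div_log_one_div s (Real.log c)) ?_ ?_
  · filter_upwards [hL.eventually_le_coverRatio hU, eventually_mul_le_one N, self_mem_nhdsWithin]
      with r hr hNr hr0
    exact hr.trans (le_csSup ⟨_, hub hr0⟩ (hmem hNr))
  · filter_upwards [eventually_mul_le_one N, self_mem_nhdsWithin] with r hNr hr0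
    exact csSup_le ⟨_, hmem hNr⟩ (hub hr0)

theorem dimM_eq (hU : HasUpperCoverBound E C s) (hL : HasLowerCoverBound E c s)
    (hE : Bornology.IsBounded E) : dimM E = s := by
  obtain ⟨ρ, hρ, hEρ⟩ := hE.subset_ball_lt 1 0
  have hcover {r : ℝ} (hr : r ∈ Ioo (0 : ℝ) 1) :
      CoveredBy (closedCube · r) (C * ρ ^ s * (1 / r) ^ s) E := by
    have hr0 : 0 < r := hr.1
    convert hU.coveredBy 0 r ρ hr0 (hr.2.trans hρ).le using 1
    · rw [mul_assoc, ← Real.mul_rpow (by positivity) (by positivity), mul_one_div]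
    · rw [inter_eq_left.2 hEρ]
  refine (tendsto_of_tendsto_of_tendsto_of_le_of_le'
    (tendsto_add_div_log_one_div s (Real.log c))
    (tendsto_add_div_log_one_div s (Real.log (C * ρ ^ s))) ?_ ?_).limsup_eq
  · filter_upwards [hL.eventually_le, Ioo_mem_nhdsGT one_pos] with r hr hr01
    exact add_div_log_le hL.pos ((one_lt_div hr01.1).2 hr01.2)
      (hr _ ((hcover hr01).coveredBy_Ncov.mono inter_subset_left le_rfl))
  · filter_upwards [Ioo_mem_nhdsGT one_pos] with r hr
    exact log_div_log_le hU.nonneg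
      (one_le_mul_of_one_le_of_one_le hU.one_le (Real.one_le_rpow hρ.le hU.nonneg))
      ((one_lt_div hr.1).2 hr.2) (Nat.cast_nonneg _) (Ncov_le (hcover hr))

end Dimensions

/-! ### Centers of Cantor intervals -/

section CantorCenter

variable {l r R ρ : ℝ} {v w : List Bool} {A : Set ℝ} {z : ℝ}

/-- The center of the interval with address `w` in the Cantor construction of ratio `l`. The first
letter of `w` chooses a child of `[0, 1]`, the others an address inside that child. -/
def cantorCenter (l : ℝ) : List Bool → ℝ
  | [] => 1 / 2
  | b :: w => l * cantorCenter l w + if b then 1 - l else 0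

/-- The dimension `log 2 / log (1 / l)` of the Cantor set of ratio `l`. -/
def cantorDim (l : ℝ) : ℝ := Real.logb l⁻¹ 2

theorem cantorDim_nonneg (h0 : 0 < l) (h1 : l < 1) : 0 ≤ cantorDim l :=
  Real.logb_nonneg ((one_lt_inv₀ h0).2 h1) one_le_two

theorem inv_pow_rpow_cantorDim (h0 : 0 < l) (h1 : l < 1) (j : ℕ) :
    (l⁻¹ ^ j) ^ cantorDim l = 2 ^ j := by
  rw [← Real.rpow_pow_comm (by positivity), cantorDim,
    Real.rpow_logb (by positivity) ((one_lt_inv₀ h0).2 h1).ne' two_pos]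

theorem cantorCenter_mem_Ioo (h0 : 0 < l) (h1 : l ≤ 1) (w : List Bool) :
    cantorCenter l w ∈ Ioo 0 1 := by
  induction w with
  | nil => norm_num [cantorCenter]
  | cons b w ih =>
    have hpos : 0 < l * cantorCenter l w := mul_pos h0 ih.1
    have hlt : l * cantorCenter l w < l := mul_lt_of_lt_one_right h0 ih.2
    cases b <;> simp only [cantorCenter, Bool.false_eq_true, if_true, if_false] <;>
      constructor <;> linarith

theorem cantorCenter_replicate_append (l : ℝ) (k : ℕ) (w : List Bool) :
    cantorCenter l (List.replicate k false ++ w) = l ^ k * cantorCenter l w := by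
  induction k with
  | zero => simp
  | succ k ih => simp [List.replicate_succ, cantorCenter, ih, pow_succ', mul_assoc]

theorem pow_mul_mem_range_cantorCenter (hz : z ∈ range (cantorCenter l)) (k : ℕ) :
    l ^ k * z ∈ range (cantorCenter l) := by
  obtain ⟨w, rfl⟩ := hz
  exact ⟨_, cantorCenter_replicate_append l k w⟩

theorem mem_range_cantorCenter_of_mul_mem (h0 : 0 < l) (h1 : l < 1 / 2) (hz : z < 1)
    (h : l * z ∈ range (cantorCenter l)) : z ∈ range (cantorCenter l) := by
  have hlz : l * z < l := mul_lt_of_lt_one_right h0 hz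
  obtain ⟨_ | ⟨_ | _, w⟩, hw⟩ := h
  · simp only [cantorCenter] at hw
    linarith
  · simp only [cantorCenter, Bool.false_eq_true, if_false, add_zero] at hw
    exact ⟨w, mul_left_cancel₀ h0.ne' hw⟩
  · simp only [cantorCenter, if_true] at hw
    linarith [mul_pos h0 (cantorCenter_mem_Ioo h0 (by linarith) w).1]

theorem mem_range_cantorCenter_of_pow_mul_mem (h0 : 0 < l) (h1 : l < 1 / 2) (hz : z < 1) {k : ℕ}
    (h : l ^ k * z ∈ range (cantorCenter l)) : z ∈ range (cantorCenter l) := by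
  induction k generalizing z with
  | zero => simpa using h
  | succ k ih =>
    have hlz : l * z < 1 := (mul_lt_of_lt_one_right h0 hz).trans (by linarith)
    exact mem_range_cantorCenter_of_mul_mem h0 h1 hz (ih hlz (by rwa [← mul_assoc, ← pow_succ]))

theorem lt_abs_cantorCenter_sub_of_head?_ne (h0 : 0 < l) (h1 : l < 1 / 2)
    (h : v.head? ≠ w.head?) : 1 / 2 - l < |cantorCenter l v - cantorCenter l w| := by
  have hmid : cantorCenter l [] = 1 / 2 := rfl
  have hleft (u : List Bool) : cantorCenter l (false :: u) < l := by
    simpa [cantorCenter, h0] using (cantorCenter_mem_Ioo h0 (by linarith) u).2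
  have hright (u : List Bool) : 1 - l < cantorCenter l (true :: u) := by
    simpa [cantorCenter, h0] using (cantorCenter_mem_Ioo h0 (by linarith) u).1
  rw [lt_abs]
  obtain _ | ⟨_ | _, v⟩ := v <;> obtain _ | ⟨_ | _, w⟩ := w
  · exact absurd rfl h
  · exact .inl (by linarith [hleft w])
  · exact .inr (by linarith [hright w])
  · exact .inr (by linarith [hleft v])
  · exact absurd rfl h
  · exact .inr (by linarith [hleft v, hright w])
  · exact .inl (by linarith [hright v])
  · exact .inl (by linarith [hright v, hleft w])
  · exact absurd rfl h

theorem lt_abs_cantorCenter_sub (h0 : 0 < l) (h1 : l < 1 / 2) (hlen : v.length = w.length)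
    (h : v ≠ w) : l ^ v.length * (1 / 2 - l) < |cantorCenter l v - cantorCenter l w| := by
  induction v generalizing w with
  | nil => exact absurd (List.length_eq_zero_iff.1 hlen.symm).symm h
  | cons b v ih =>
    obtain _ | ⟨b', w⟩ := w
    · simp at hlen
    obtain rfl | hb := eq_or_ne b b'
    · have hsub : cantorCenter l (b :: v) - cantorCenter l (b :: w) =
          l * (cantorCenter l v - cantorCenter l w) := by
        simp only [cantorCenter]
        ring
      rw [hsub, abs_mul, abs_of_pos h0, List.length_cons, pow_succ', mul_assoc]
      exact mul_lt_mul_of_pos_left (ih (by simpa using hlen) (by simpa using h)) h0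
    · refine (mul_le_of_le_one_left (by linarith) (pow_le_one₀ h0.le (by linarith))).trans_lt ?_
      exact lt_abs_cantorCenter_sub_of_head?_ne h0 h1 (by simpa using hb)

theorem range_cantorCenter (l : ℝ) :
    range (cantorCenter l) = {1 / 2} ∪ (fun x => l * x + 0) '' range (cantorCenter l) ∪
      (fun x => l * x + (1 - l)) '' range (cantorCenter l) := by
  ext z
  constructor
  · rintro ⟨_ | ⟨_ | _, w⟩, rfl⟩
    · exact .inl (.inl rfl)
    · exact .inl (.inr ⟨_, ⟨w, rfl⟩, by simp [cantorCenter]⟩)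
    · exact .inr ⟨_, ⟨w, rfl⟩, by simp [cantorCenter]⟩
  · rintro ((rfl | ⟨_, ⟨w, rfl⟩, rfl⟩) | ⟨_, ⟨w, rfl⟩, rfl⟩)
    · exact ⟨[], rfl⟩
    · exact ⟨false :: w, by simp [cantorCenter]⟩
    · exact ⟨true :: w, by simp [cantorCenter]⟩

theorem coveredBy_range_cantorCenter_pow (h0 : 0 < l) (h1 : l ≤ 1) (j : ℕ) :
    CoveredBy (fun c => Icc c (c + l ^ j)) (2 ^ (j + 1) - 1) (range (cantorCenter l)) := by
  induction j with
  | zero =>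
    refine (CoveredBy.of_subset (c := 0) ?_).mono le_rfl (by norm_num)
    rintro _ ⟨w, rfl⟩
    simpa using Ioo_subset_Icc_self (cantorCenter_mem_Ioo h0 h1 w)
  | succ j ih =>
    have hmid : CoveredBy (fun c => Icc c (c + l ^ (j + 1))) 1 {1 / 2} :=
      CoveredBy.of_subset (c := 1 / 2) (by simp [h0.le])
    have hpiece (d : ℝ) := ih.affine_Icc h0.le d
    rw [← pow_succ'] at hpiece
    rw [range_cantorCenter]
    exact ((hmid.union (hpiece 0)).union (hpiece (1 - l))).mono le_rfl (by ring_nf; rfl)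

theorem coveredBy_range_cantorCenter (h0 : 0 < l) (h1 : l < 1) (hr : 0 < r) (hr1 : r ≤ 1) :
    CoveredBy (fun c => Icc c (c + r)) (4 * (1 / r) ^ cantorDim l) (range (cantorCenter l)) := by
  obtain ⟨j, hjr, hrj⟩ := exists_nat_pow_near_of_lt_one hr hr1 h0 h1
  refine ((coveredBy_range_cantorCenter_pow h0 h1.le (j + 1)).mono_Icc hjr.le).mono le_rfl ?_
  have hscale : l⁻¹ ^ j ≤ 1 / r := by
    rw [inv_pow, one_div]
    exact inv_anti₀ hr hrj
  calc (2 : ℝ) ^ (j + 1 + 1) - 1 ≤ 4 * 2 ^ j := by ring_nf; linarith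
    _ = 4 * (l⁻¹ ^ j) ^ cantorDim l := by rw [inv_pow_rpow_cantorDim h0 h1]
    _ ≤ 4 * (1 / r) ^ cantorDim l := by
      gcongr
      exact cantorDim_nonneg h0 h1

theorem exists_subset_image_range_cantorCenter (h0 : 0 < l) (h1 : l < 1 / 2)
    (hA : A ⊆ range (cantorCenter l)) (hdist : ∀ x ∈ A, ∀ y ∈ A, |x - y| < 1 / 2 - l) :
    ∃ d, A ⊆ (fun x => l * x + d) '' range (cantorCenter l) := by
  obtain rfl | ⟨z, hz⟩ := A.eq_empty_or_nonempty
  · exact ⟨0, empty_subset _⟩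
  obtain ⟨v, rfl⟩ := hA hz
  have hhead {w : List Bool} (hw : cantorCenter l w ∈ A) : w.head? = v.head? := by
    by_contra hne
    exact (lt_abs_cantorCenter_sub_of_head?_ne h0 h1 hne).not_gt (hdist _ hw _ hz)
  obtain _ | ⟨b, v⟩ := v
  · refine ⟨(1 - l) / 2, fun x hx => ?_⟩
    obtain ⟨w, rfl⟩ := hA hx
    obtain rfl : w = [] := by simpa using hhead hx
    exact ⟨_, ⟨[], rfl⟩, by simp only [cantorCenter]; ring⟩
  · refine ⟨if b then 1 - l else 0, fun x hx => ?_⟩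
    obtain ⟨w, rfl⟩ := hA hx
    obtain ⟨w', rfl⟩ := List.head?_eq_some_iff.1 (hhead hx)
    exact ⟨_, ⟨w', rfl⟩, rfl⟩

theorem exists_subset_image_pow_range_cantorCenter (h0 : 0 < l) (h1 : l < 1 / 2) (i : ℕ)
    (hA : A ⊆ range (cantorCenter l)) (hdist : ∀ x ∈ A, ∀ y ∈ A, |x - y| < l ^ i * (1 / 2 - l)) :
    ∃ d, A ⊆ (fun x => l ^ (i + 1) * x + d) '' range (cantorCenter l) := by
  induction i generalizing A with
  | zero => simpa using exists_subset_image_range_cantorCenter h0 h1 hA (by simpa using hdist)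
  | succ i ih =>
    have hpow : l ^ (i + 1) ≤ 1 := pow_le_one₀ h0.le (by linarith)
    obtain ⟨d, hd⟩ := exists_subset_image_range_cantorCenter h0 h1 hA fun x hx y hy =>
      (hdist x hx y hy).trans_le (mul_le_of_le_one_left (by linarith) hpow)
    obtain ⟨d', hd'⟩ := ih (A := {x ∈ range (cantorCenter l) | l * x + d ∈ A})
      (fun x hx => hx.1) fun x hx y hy => by
        have hxy := hdist _ hx.2 _ hy.2
        rw [add_sub_add_right_eq_sub, ← mul_sub, abs_mul, abs_of_pos h0, pow_succ', mul_assoc]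
          at hxy
        exact lt_of_mul_lt_mul_left hxy h0.le
    refine ⟨l * d' + d, fun x hx => ?_⟩
    obtain ⟨y, hy, rfl⟩ := hd hx
    obtain ⟨u, hu, rfl⟩ := hd' ⟨hy, hx⟩
    exact ⟨u, hu, by ring⟩

theorem exists_subset_image_range_cantorCenter_of_scale (h0 : 0 < l) (h1 : l < 1 / 2) (hρ : 0 < ρ)
    (hρ1 : ρ ≤ 1) (hA : A ⊆ range (cantorCenter l))
    (hdist : ∀ x ∈ A, ∀ y ∈ A, |x - y| < ρ * (1 / 2 - l)) :
    ∃ t ∈ Ioc 0 ρ, ∃ d, A ⊆ (fun x => t * x + d) '' range (cantorCenter l) := by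
  obtain ⟨i, hiρ, hρi⟩ := exists_nat_pow_near_of_lt_one hρ hρ1 h0 (by linarith)
  refine ⟨l ^ (i + 1), ⟨by positivity, hiρ.le⟩, ?_⟩
  exact exists_subset_image_pow_range_cantorCenter h0 h1 i hA fun x hx y hy =>
    (hdist x hx y hy).trans_le (mul_le_mul_of_nonneg_right hρi (by linarith))

/-- The one-dimensional analogue of `ℰ_a` before taking closures: all dilates of the centers by
powers of `1 / l`. -/
def dilatedCenters (l : ℝ) : Set ℝ := {y | ∃ k : ℕ, l ^ k * y ∈ range (cantorCenter l)}

theorem pow_mul_mem_range_cantorCenter_of_lt_one (h0 : 0 < l) (h1 : l < 1 / 2)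
    (hz : z ∈ dilatedCenters l) {K : ℕ} (hK : l ^ K * z < 1) :
    l ^ K * z ∈ range (cantorCenter l) := by
  obtain ⟨k, hk⟩ := hz
  obtain hkK | hKk := le_total k K
  · obtain ⟨d, rfl⟩ := Nat.exists_eq_add_of_le' hkK
    rw [pow_add, mul_assoc]
    exact pow_mul_mem_range_cantorCenter hk d
  · obtain ⟨d, rfl⟩ := Nat.exists_eq_add_of_le' hKk
    rw [pow_add, mul_assoc] at hk
    exact mem_range_cantorCenter_of_pow_mul_mem h0 h1 hK hk

theorem exists_subset_image_of_subset_dilatedCenters (h0 : 0 < l) (h1 : l < 1 / 2) (hρ : 0 < ρ)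
    (hA : A ⊆ dilatedCenters l) (hdist : ∀ x ∈ A, ∀ y ∈ A, |x - y| < ρ * (1 / 2 - l)) :
    ∃ t ∈ Ioc 0 ρ, ∃ d, A ⊆ (fun x => t * x + d) '' range (cantorCenter l) := by
  obtain rfl | ⟨z, hz⟩ := A.eq_empty_or_nonempty
  · exact ⟨ρ, ⟨hρ, le_rfl⟩, 0, empty_subset _⟩
  have hsmall (M : ℝ) : ∀ᶠ K : ℕ in atTop, l ^ K * M < 1 := by
    have hlim := (tendsto_pow_atTop_nhds_zero_of_lt_one h0.le (by linarith)).mul_const M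
    rw [zero_mul] at hlim
    exact hlim.eventually_lt_const one_pos
  obtain ⟨K, hKz, hKρ⟩ := ((hsmall (z + ρ * (1 / 2 - l))).and (hsmall ρ)).exists
  have hlK : 0 < l ^ K := pow_pos h0 K
  have hscaled : (l ^ K * ·) '' A ⊆ range (cantorCenter l) := by
    rintro _ ⟨x, hx, rfl⟩
    have hxz : x ≤ z + ρ * (1 / 2 - l) := by linarith [(abs_lt.1 (hdist x hx z hz)).2]
    exact pow_mul_mem_range_cantorCenter_of_lt_one h0 h1 (hA hx)
      ((mul_le_mul_of_nonneg_left hxz hlK.le).trans_lt hKz)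
  obtain ⟨t, ⟨ht0, htρ⟩, d, hd⟩ := exists_subset_image_range_cantorCenter_of_scale h0 h1
    (mul_pos hlK hρ) hKρ.le hscaled <| by
      rintro _ ⟨x, hx, rfl⟩ _ ⟨y, hy, rfl⟩
      rw [← mul_sub, abs_mul, abs_of_pos hlK, mul_assoc]
      exact mul_lt_mul_of_pos_left (hdist x hx y hy) hlK
  refine ⟨t / l ^ K, ⟨by positivity, (div_le_iff₀' hlK).2 htρ⟩, d / l ^ K, fun x hx => ?_⟩
  obtain ⟨y, hy, hyx : t * y + d = l ^ K * x⟩ := hd (mem_image_of_mem _ hx)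
  exact ⟨y, hy, by field_simp; linarith⟩

theorem coveredBy_dilatedCenters_inter_ball (h0 : 0 < l) (h1 : l < 1 / 2) (hr : 0 < r)
    (hrR : r ≤ R) (x : ℝ) :
    CoveredBy (fun c => Icc c (c + r)) (4 * (2 / (1 / 2 - l) * (R / r)) ^ cantorDim l)
      (dilatedCenters l ∩ ball x R) := by
  have hgap : 0 < 1 / 2 - l := by linarith
  have hR : 0 < R := hr.trans_le hrR
  have hRρ : R ≤ 2 / (1 / 2 - l) * R :=
    le_mul_of_one_le_left hR.le ((one_le_div hgap).2 (by linarith))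
  set ρ := 2 / (1 / 2 - l) * R with hρ
  have hρ0 : 0 < ρ := by positivity
  obtain ⟨t, ⟨ht0, htρ⟩, d, hd⟩ := exists_subset_image_of_subset_dilatedCenters h0 h1 hρ0
    (A := dilatedCenters l ∩ ball x R) inter_subset_left fun y hy z hz => by
      have hsum : ρ * (1 / 2 - l) = R + R := by
        rw [hρ, mul_right_comm, div_mul_cancel₀ _ hgap.ne', two_mul]
      rw [← Real.dist_eq, hsum]
      exact (dist_triangle_right y z x).trans_lt (add_lt_add hy.2 hz.2)
  have hcover := coveredBy_range_cantorCenter h0 (by linarith) (div_pos hr hρ0)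
    ((div_le_one hρ0).2 (hrR.trans hRρ))
  have hscale : t * (r / ρ) ≤ r := by
    calc t * (r / ρ) ≤ ρ * (r / ρ) := by gcongr
      _ = r := mul_div_cancel₀ r hρ0.ne'
  refine ((hcover.affine_Icc ht0.le d).mono_Icc hscale).mono hd (le_of_eq ?_)
  rw [one_div_div, hρ, mul_div_assoc]

end CantorCenter

/-! ### The sets `E_a` and `ℰ_a` -/

section CantorSets

variable {n : ℕ} {a l : ℝ} {z : Pt n}

theorem cantorCenter_ofFn (l : ℝ) {m : ℕ} (b : Fin m → Bool) :
    cantorCenter l (List.ofFn b) =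
      (∑ t, if b t then l ^ (t : ℕ) * (1 - l) else 0) + l ^ m / 2 := by
  induction m with
  | zero => simp [cantorCenter]
  | succ m ih =>
    simp only [List.ofFn_succ, cantorCenter, ih, Fin.sum_univ_succ, Fin.val_zero, Fin.val_succ,
      pow_succ', pow_zero, mul_add, Finset.mul_sum, mul_ite, mul_zero, mul_assoc, one_mul]
    ring

theorem mem_cantorCenters_iff : z ∈ cantorCenters n a ↔
    ∃ m, ∀ i, ∃ w, w.length = m ∧ z i = cantorCenter ((1 - a) / 2) w := by
  simp only [cantorCenters, mem_ofPred_eq, ← cantorCenter_ofFn]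
  refine exists_congr fun m => forall_congr' fun i => ⟨?_, ?_⟩
  · rintro ⟨b, hb⟩
    exact ⟨List.ofFn b, List.length_ofFn, hb⟩
  · rintro ⟨w, rfl, hw⟩
    exact ⟨w.get, by rwa [List.ofFn_get]⟩

theorem mem_range_of_mem_cantorCenters (hz : z ∈ cantorCenters n a) (i : Fin n) :
    z i ∈ range (cantorCenter ((1 - a) / 2)) := by
  obtain ⟨m, hm⟩ := mem_cantorCenters_iff.1 hz
  obtain ⟨w, -, hw⟩ := hm i
  exact ⟨w, hw.symm⟩

theorem pow_smul_mem_cantorCenters (hz : z ∈ cantorCenters n a) (k : ℕ) :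
    ((1 - a) / 2) ^ k • z ∈ cantorCenters n a := by
  obtain ⟨m, hm⟩ := mem_cantorCenters_iff.1 hz
  refine mem_cantorCenters_iff.2 ⟨k + m, fun i => ?_⟩
  obtain ⟨w, rfl, hw⟩ := hm i
  refine ⟨List.replicate k false ++ w, by simp, ?_⟩
  rw [cantorCenter_replicate_append, ← hw, PiLp.smul_apply, smul_eq_mul]

theorem Ea_subset_calEa (n : ℕ) (a : ℝ) : Ea n a ⊆ calEa n a :=
  fun x hx => ⟨0, x, hx, by simp⟩

theorem calEa_subset_closure (ha : a ≠ 1) :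
    calEa n a ⊆ closure {z | ∀ i, z i ∈ dilatedCenters ((1 - a) / 2)} := by
  rintro _ ⟨k, x, hx, rfl⟩
  refine map_mem_closure (f := fun x : Pt n => (2 / (1 - a)) ^ k • x) (by fun_prop) hx ?_
  intro z hz i
  have ha' : 1 - a ≠ 0 := sub_ne_zero.2 ha.symm
  have hinv : ((1 - a) / 2) ^ k * (2 / (1 - a)) ^ k = 1 := by
    rw [← mul_pow, div_mul_div_cancel₀ two_ne_zero, div_self ha', one_pow]
  refine ⟨k, ?_⟩
  rw [PiLp.smul_apply, smul_eq_mul, ← mul_assoc, hinv, one_mul]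
  exact mem_range_of_mem_cantorCenters hz i

theorem isBounded_Ea (ha : a ∈ Ioo (0 : ℝ) 1) : Bornology.IsBounded (Ea n a) := by
  refine ((isBounded_box (isBounded_Ioo 0 1)).subset fun z hz i => ?_).closure
  obtain ⟨w, hw⟩ := mem_range_of_mem_cantorCenters hz i
  rw [← hw]
  exact cantorCenter_mem_Ioo (by linarith [ha.2]) (by linarith [ha.1]) w

theorem hasUpperCoverBound_closure_box (n : ℕ) (h0 : 0 < l) (h1 : l < 1 / 2) :
    HasUpperCoverBound (closure {z : Pt n | ∀ i, z i ∈ dilatedCenters l})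
      ((4 * (2 / (1 / 2 - l)) ^ cantorDim l) ^ n) (n * cantorDim l) where
  nonneg := mul_nonneg (Nat.cast_nonneg n) (cantorDim_nonneg h0 (by linarith))
  one_le := by
    have hgap : 1 ≤ 2 / (1 / 2 - l) := (one_le_div (by linarith)).2 (by linarith)
    exact one_le_pow₀ (one_le_mul_of_one_le_of_one_le (by norm_num)
      (Real.one_le_rpow hgap (cantorDim_nonneg h0 (by linarith))))
  coveredBy x r R hr hrR := by
    have hgap : 0 ≤ 2 / (1 / 2 - l) := div_nonneg zero_le_two (by linarith)
    have hq : 0 ≤ R / r := div_nonneg (hr.le.trans hrR) hr.le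
    refine (CoveredBy.closure_box fun y =>
      coveredBy_dilatedCenters_inter_ball h0 h1 hr hrR y).mono Subset.rfl (le_of_eq ?_)
    rw [Real.mul_rpow hgap hq, mul_comm (n : ℝ), Real.rpow_mul_natCast hq, ← mul_pow, mul_assoc]

theorem two_pow_pow_le_of_coveredBy (ha : a ∈ Ioo (0 : ℝ) 1) {k m : ℕ} {r B : ℝ}
    (hk : Ea n a ⊆ ball 0 (((1 - a) / 2) ^ k)⁻¹)
    (hr : r ≤ ((1 - a) / 2) ^ k * (((1 - a) / 2) ^ m * (1 / 2 - (1 - a) / 2)))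
    (h : CoveredBy (closedCube · r) B (Ea n a ∩ ball 0 1)) : (2 ^ m) ^ n ≤ B := by
  have h0 : 0 < (1 - a) / 2 := by linarith [ha.2]
  have h1 : (1 - a) / 2 < 1 / 2 := by linarith [ha.1]
  set l := (1 - a) / 2
  have hlk : 0 < l ^ k := pow_pos h0 k
  let p (β : Fin n → Fin m → Bool) : Pt n :=
    WithLp.toLp 2 fun i => cantorCenter l (List.ofFn (β i))
  have hp (β : Fin n → Fin m → Bool) : p β ∈ cantorCenters n a :=
    mem_cantorCenters_iff.2 ⟨m, fun i => ⟨List.ofFn (β i), List.length_ofFn, rfl⟩⟩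
  have hmem (β : Fin n → Fin m → Bool) : l ^ k • p β ∈ Ea n a ∩ ball 0 1 := by
    refine ⟨subset_closure (pow_smul_mem_cantorCenters (hp β) k), ?_⟩
    have hnorm := mem_ball_zero_iff.1 (hk (subset_closure (hp β)))
    rw [mem_ball_zero_iff, norm_smul, Real.norm_of_nonneg hlk.le]
    exact (lt_inv_mul_iff₀ hlk).1 (by simpa using hnorm)
  have hsep (β γ : Fin n → Fin m → Bool) (c : Pt n) (hβ : l ^ k • p β ∈ closedCube c r)
      (hγ : l ^ k • p γ ∈ closedCube c r) : β = γ := by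
    ext1 i
    by_contra hne
    have hdist := lt_abs_cantorCenter_sub h0 h1 (v := List.ofFn (β i)) (w := List.ofFn (γ i))
      (by simp) (List.ofFn_injective.ne hne)
    have hcube : |l ^ k * cantorCenter l (List.ofFn (β i)) -
        l ^ k * cantorCenter l (List.ofFn (γ i))| ≤ r := abs_sub_le_of_mem_closedCube hβ hγ i
    rw [← mul_sub, abs_mul, abs_of_pos hlk] at hcube
    rw [List.length_ofFn] at hdist
    exact (mul_lt_mul_of_pos_left hdist hlk).not_ge (hcube.trans hr)
  simpa using h.card_le hmem hsep

theorem exists_hasLowerCoverBound_Ea (n : ℕ) (ha : a ∈ Ioo (0 : ℝ) 1) :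
    ∃ c, HasLowerCoverBound (Ea n a) c (n * cantorDim ((1 - a) / 2)) := by
  have h0 : 0 < (1 - a) / 2 := by linarith [ha.2]
  have h1 : (1 - a) / 2 < 1 := by linarith [ha.1]
  have hgap : 0 < 1 / 2 - (1 - a) / 2 := by linarith [ha.1]
  obtain ⟨ρ, hρ, hEρ⟩ := (isBounded_Ea (n := n) ha).subset_ball_lt 0 0
  obtain ⟨k, hk⟩ := exists_pow_lt_of_lt_one (inv_pos.2 hρ) h1
  have hball : Ea n a ⊆ ball 0 (((1 - a) / 2) ^ k)⁻¹ :=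
    hEρ.trans (ball_subset_ball ((le_inv_comm₀ (by positivity) hρ).1 hk.le))
  set l := (1 - a) / 2
  set δ := l ^ k * (1 / 2 - l) with hδ
  have hδ0 : 0 < δ := by positivity
  refine ⟨(δ ^ cantorDim l / 2) ^ n, by positivity, ?_⟩
  filter_upwards [Ioc_mem_nhdsGT hδ0] with r ⟨hr, hrδ⟩ B hB
  obtain ⟨m, hmr, hrm⟩ := exists_nat_pow_near_of_lt_one (div_pos hr hδ0)
    ((div_le_one hδ0).2 hrδ) h0 h1
  have hscale : δ * (1 / r) ≤ l⁻¹ ^ (m + 1) := by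
    rw [mul_one_div, ← inv_div r δ, inv_pow]
    exact inv_anti₀ (by positivity) hmr.le
  have hpow : (δ * (1 / r)) ^ cantorDim l ≤ 2 ^ (m + 1) := by
    rw [← inv_pow_rpow_cantorDim h0 h1]
    exact Real.rpow_le_rpow (by positivity) hscale (cantorDim_nonneg h0 h1)
  calc (δ ^ cantorDim l / 2) ^ n * (1 / r) ^ (n * cantorDim l)
      = ((δ * (1 / r)) ^ cantorDim l / 2) ^ n := by
        rw [mul_comm (n : ℝ), Real.rpow_mul_natCast (by positivity), ← mul_pow,
          Real.mul_rpow hδ0.le (by positivity), div_mul_eq_mul_div]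
    _ ≤ (2 ^ m) ^ n := by
      gcongr
      rwa [div_le_iff₀ two_pos, ← pow_succ]
    _ ≤ B := by
      refine two_pow_pow_le_of_coveredBy ha hball ?_ hB
      rw [div_le_iff₀ hδ0, hδ] at hrm
      exact hrm.trans_eq (mul_left_comm _ _ _)

end CantorSets

/-- `dim_M E_a = dim_L E_a = dim_L ℰ_a = dim_LG E_a = dim_LG ℰ_a
= n log 2 / log (2/(1-a))`. -/
theorem cantor_dims (n : ℕ) (hn : 1 ≤ n) (a : ℝ) (ha : a ∈ Ioo (0:ℝ) 1) :
    dimM (Ea n a) = (n : ℝ) * Real.log 2 / Real.log (2 / (1 - a)) ∧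
    dimLoc (Ea n a) = (n : ℝ) * Real.log 2 / Real.log (2 / (1 - a)) ∧
    dimLoc (calEa n a) = (n : ℝ) * Real.log 2 / Real.log (2 / (1 - a)) ∧
    dimGlob (Ea n a) = (n : ℝ) * Real.log 2 / Real.log (2 / (1 - a)) ∧
    dimGlob (calEa n a) = (n : ℝ) * Real.log 2 / Real.log (2 / (1 - a)) := by
  have h0 : 0 < (1 - a) / 2 := by linarith [ha.2]
  have h1 : (1 - a) / 2 < 1 / 2 := by linarith [ha.1]
  have hdim : n * Real.log 2 / Real.log (2 / (1 - a)) = n * cantorDim ((1 - a) / 2) := by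
    rw [cantorDim, inv_div, Real.logb, mul_div_assoc]
  have hsub := Ea_subset_calEa n a
  have hU := (hasUpperCoverBound_closure_box n h0 h1).mono (calEa_subset_closure ha.2.ne)
  obtain ⟨c, hL⟩ := exists_hasLowerCoverBound_Ea n ha
  rw [hdim]
  exact ⟨dimM_eq (hU.mono hsub) hL (isBounded_Ea ha), dimLoc_eq (hU.mono hsub) hL,
    dimLoc_eq hU (hL.mono hsub), dimGlob_eq (hU.mono hsub) hL, dimGlob_eq hU (hL.mono hsub)⟩

end
end
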